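/- Margin preservation by leverage-score feature selection: there is an absolute constant c > 0 with the following property. In the SVM dual setup, let ε ∈ (0,1), let X ∈ ℝ^{p×d} have rank ρ and compact singular value decomposition X = UΣV^T, define leverage-score probabilities p_i = ‖v_i‖₂²/ρ for i = 1,…,d where v_i is the i-th row of V, let r ≥ c·(ρ/ε²)·log(10ρ/ε²), draw indices j_1,…,j_r i.i.d. from (p_1,…,p_d), and let R ∈ ℝ^{d×r} be the random matrix whose t-th column is (1/√(r·p_{j_t}))·e_{j_t}. Then with probability at least 0.99 the following holds: for every α* ∈ K maximizing f over K with Σ_i α*_i = ‖X^T Y α*‖₂² and every α̃* ∈ K maximizing f̃ over K with Σ_i α̃*_i = ‖R^T X^T Y α̃*‖₂², one has (1 − ε)·‖R^T X^T Y α̃*‖₂² ≤ ‖X^T Y α*‖₂². -/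

import Mathlib

open Matrix

/-- Euclidean norm of a vector in ℝ^n. -/
noncomputable def euclNorm {n : ℕ} (x : Fin n → ℝ) : ℝ := Real.sqrt (∑ i, x i ^ 2)

/-- Spectral norm (ℓ₂ operator norm) of a real matrix: the supremum of `‖A x‖₂`
over unit vectors `x`. -/
noncomputable def specNorm {m n : ℕ} (A : Matrix (Fin m) (Fin n) ℝ) : ℝ :=
  sSup {c : ℝ | ∃ x : Fin n → ℝ, euclNorm x = 1 ∧ c = euclNorm (A.mulVec x)}

/-- The SVM dual feasible set `K = {α : 0 ≤ αᵢ ≤ C, Σᵢ yᵢαᵢ = 0}`. -/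
def svmFeasible {p : ℕ} (y : Fin p → ℝ) (C : ℝ) (α : Fin p → ℝ) : Prop :=
  (∀ i, 0 ≤ α i ∧ α i ≤ C) ∧ ∑ i, y i * α i = 0

/-- The SVM dual objective `f(α) = Σᵢ αᵢ − (1/2)‖XᵀYα‖₂²`, where `Y = diag(y)`. -/
noncomputable def svmDualObj {p d : ℕ} (X : Matrix (Fin p) (Fin d) ℝ) (y : Fin p → ℝ)
    (α : Fin p → ℝ) : ℝ :=
  ∑ i, α i - (1 / 2) * euclNorm (Xᵀ.mulVec ((Matrix.diagonal y).mulVec α)) ^ 2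

/-- The reduced SVM dual objective `f̃(α) = Σᵢ αᵢ − (1/2)‖RᵀXᵀYα‖₂²`. -/
noncomputable def svmDualObjRed {p d r : ℕ} (X : Matrix (Fin p) (Fin d) ℝ)
    (R : Matrix (Fin d) (Fin r) ℝ) (y : Fin p → ℝ) (α : Fin p → ℝ) : ℝ :=
  ∑ i, α i - (1 / 2) * euclNorm (Rᵀ.mulVec (Xᵀ.mulVec ((Matrix.diagonal y).mulVec α))) ^ 2

/-- The leverage-score probabilities `p_i = ‖v_i‖₂²/ρ`, where `v_i` is the
`i`-th row of `V ∈ ℝ^{d×ρ}`. -/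
noncomputable def lvgProb {d ρ : ℕ} (V : Matrix (Fin d) (Fin ρ) ℝ) (i : Fin d) : ℝ :=
  (∑ k, V i k ^ 2) / ρ

/-- The sampling-and-rescaling matrix `R ∈ ℝ^{d×r}` determined by the drawn
indices `j_1,…,j_r`: the `t`-th column is `(1/√(r·p_{j_t}))·e_{j_t}`. -/
noncomputable def lvgMatrix {d ρ : ℕ} (V : Matrix (Fin d) (Fin ρ) ℝ) (r : ℕ)
    (j : Fin r → Fin d) : Matrix (Fin d) (Fin r) ℝ :=
  Matrix.of fun i t => if i = j t then 1 / Real.sqrt (r * lvgProb V (j t)) else 0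

/-!
Since the columns of `V` are orthonormal, `Vᵀ R Rᵀ V` is `ρ / r` times a sum of `r` independent
orthogonal projections onto the lines spanned by the drawn rows of `V`, each of mean `ρ⁻¹ • 1`.
The Golden–Thompson inequality, deduced from the Lie product formula and a trace inequality for
powers of two, makes the trace exponential moment of such a sum submultiplicative. The resulting
matrix Chernoff bound gives `‖Rᵀ V x‖² ≥ (1 - ε / 2) ‖V x‖²` for all `x` at once, with probability
at least `0.99`. On that event `f(α̃*) ≤ f(α*)` together with the two optimality identities reads
`2 ‖Rᵀ Xᵀ Y α̃*‖² - ‖Xᵀ Y α̃*‖² ≤ ‖Xᵀ Y α*‖²`, and the middle term is at most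
`(1 - ε / 2)⁻¹ ‖Rᵀ Xᵀ Y α̃*‖²`.
-/

section ProductFormula

open Filter Topology NormedSpace

theorem norm_pow_sub_pow_le {𝔸 : Type*} [NormedRing 𝔸] [NormOneClass 𝔸] {x y : 𝔸} {K : ℝ}
    (hx : ‖x‖ ≤ K) (hy : ‖y‖ ≤ K) (m : ℕ) :
    ‖x ^ m - y ^ m‖ ≤ m * K ^ (m - 1) * ‖x - y‖ := by
  have hK : 0 ≤ K := (norm_nonneg x).trans hx
  induction m with
  | zero => simp
  | succ m ih =>
    have hpow : K ^ (m - 1) * m * K = m * K ^ m := by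
      cases m with
      | zero => simp
      | succ m => rw [Nat.add_sub_cancel]; ring
    calc ‖x ^ (m + 1) - y ^ (m + 1)‖
        = ‖(x ^ m - y ^ m) * x + y ^ m * (x - y)‖ := by
          congr 1
          noncomm_ring
      _ ≤ ‖x ^ m - y ^ m‖ * ‖x‖ + ‖y‖ ^ m * ‖x - y‖ :=
          (norm_add_le _ _).trans <| add_le_add (norm_mul_le _ _) <|
            (norm_mul_le _ _).trans <| by gcongr; exact norm_pow_le _ _
      _ ≤ m * K ^ (m - 1) * ‖x - y‖ * K + K ^ m * ‖x - y‖ := by gcongr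
      _ = (m + 1 : ℕ) * K ^ (m + 1 - 1) * ‖x - y‖ := by
          rw [Nat.add_sub_cancel, Nat.cast_succ]
          linear_combination ‖x - y‖ * hpow

variable {𝔸 : Type*} [NormedRing 𝔸] [NormedAlgebra ℝ 𝔸]

theorem tendsto_nat_smul_sub_of_hasDerivAt {f : ℝ → 𝔸} {a : 𝔸} (hf : HasDerivAt f a 0) :
    Tendsto (fun m : ℕ ↦ (m : ℝ) • (f (m : ℝ)⁻¹ - f 0)) atTop (𝓝 a) := by
  have hinv : Tendsto (fun m : ℕ ↦ (m : ℝ)⁻¹) atTop (𝓝[≠] 0) :=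
    (tendsto_inv_atTop_nhdsGT_zero.comp tendsto_natCast_atTop_atTop).mono_right
      (nhdsWithin_mono _ fun _ h ↦ (Set.mem_Ioi.1 h).ne')
  simpa [Function.comp_def] using hf.tendsto_slope_zero.comp hinv

variable [NormOneClass 𝔸]

theorem eventually_norm_inv_nat_le_of_hasDerivAt {f : ℝ → 𝔸} {a : 𝔸} (hf : HasDerivAt f a 0)
    (hf0 : f 0 = 1) {K : ℝ} (hK : ‖a‖ < K) :
    ∀ᶠ m : ℕ in atTop, ‖f (m : ℝ)⁻¹‖ ≤ Real.exp (K / m) := by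
  filter_upwards [(tendsto_nat_smul_sub_of_hasDerivAt hf).norm.eventually_le_const hK,
    eventually_gt_atTop 0] with m hm hm0
  have hm0 : (0 : ℝ) < m := Nat.cast_pos.2 hm0
  rw [norm_smul, Real.norm_natCast, hf0, ← le_div_iff₀' hm0] at hm
  calc ‖f (m : ℝ)⁻¹‖ ≤ ‖f (m : ℝ)⁻¹ - 1‖ + ‖(1 : 𝔸)‖ := norm_le_norm_sub_add _ _
    _ ≤ K / m + 1 := by rw [norm_one]; gcongr
    _ ≤ Real.exp (K / m) := Real.add_one_le_exp _

theorem tendsto_inv_nat_pow_of_hasDerivAt [CompleteSpace 𝔸] {f : ℝ → 𝔸} {a : 𝔸}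
    (hf : HasDerivAt f a 0) (hf0 : f 0 = 1) :
    Tendsto (fun m : ℕ ↦ f (m : ℝ)⁻¹ ^ m) atTop (𝓝 (exp a)) := by
  let +nondep : NormedAlgebra ℚ 𝔸 := .restrictScalars ℚ ℝ 𝔸
  set g : ℝ → 𝔸 := fun t ↦ exp (t • a) with hg_def
  have hg0 : g 0 = 1 := by simp [hg_def]
  have hg : HasDerivAt g a 0 := by simpa using hasDerivAt_exp_smul_const a (0 : ℝ)
  have hg_pow : ∀ᶠ m : ℕ in atTop, g (m : ℝ)⁻¹ ^ m = exp a := by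
    filter_upwards [eventually_ne_atTop 0] with m hm
    rw [hg_def, ← NormedSpace.exp_nsmul, ← Nat.cast_smul_eq_nsmul ℝ,
      smul_inv_smul₀ (Nat.cast_ne_zero.2 hm)]
  have hdiff : Tendsto (fun m : ℕ ↦ (m : ℝ) * ‖f (m : ℝ)⁻¹ - g (m : ℝ)⁻¹‖) atTop (𝓝 0) := by
    have h := ((tendsto_nat_smul_sub_of_hasDerivAt hf).sub
      (tendsto_nat_smul_sub_of_hasDerivAt hg)).norm
    simpa [← smul_sub, norm_smul, hf0, hg0] using h
  have hbound : ∀ᶠ m : ℕ in atTop, ‖f (m : ℝ)⁻¹ ^ m - exp a‖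
      ≤ Real.exp (‖a‖ + 1) * (m * ‖f (m : ℝ)⁻¹ - g (m : ℝ)⁻¹‖) := by
    filter_upwards [eventually_norm_inv_nat_le_of_hasDerivAt hf hf0 (lt_add_one _),
      eventually_norm_inv_nat_le_of_hasDerivAt hg hg0 (lt_add_one _), hg_pow, eventually_gt_atTop 0]
      with m hfm hgm hgp hm
    have hpow : Real.exp ((‖a‖ + 1) / m) ^ (m - 1) ≤ Real.exp (‖a‖ + 1) := by
      refine (pow_le_pow_right₀ (Real.one_le_exp (by positivity)) m.pred_le).trans_eq ?_
      rw [← Real.exp_nat_mul, mul_div_cancel₀ _ (Nat.cast_ne_zero.2 hm.ne')]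
    rw [← hgp]
    calc ‖f (m : ℝ)⁻¹ ^ m - g (m : ℝ)⁻¹ ^ m‖
        ≤ m * Real.exp ((‖a‖ + 1) / m) ^ (m - 1) * ‖f (m : ℝ)⁻¹ - g (m : ℝ)⁻¹‖ :=
          norm_pow_sub_pow_le hfm hgm m
      _ ≤ m * Real.exp (‖a‖ + 1) * ‖f (m : ℝ)⁻¹ - g (m : ℝ)⁻¹‖ := by gcongr
      _ = Real.exp (‖a‖ + 1) * (m * ‖f (m : ℝ)⁻¹ - g (m : ℝ)⁻¹‖) := by ring
  rw [tendsto_iff_norm_sub_tendsto_zero]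
  refine squeeze_zero' (.of_forall fun _ ↦ norm_nonneg _) hbound ?_
  simpa using hdiff.const_mul (Real.exp (‖a‖ + 1))

theorem tendsto_exp_smul_mul_exp_smul_pow [CompleteSpace 𝔸] (a b : 𝔸) :
    Tendsto (fun m : ℕ ↦ (exp ((m : ℝ)⁻¹ • a) * exp ((m : ℝ)⁻¹ • b)) ^ m) atTop
      (𝓝 (exp (a + b))) := by
  have ha : HasDerivAt (fun t : ℝ ↦ exp (t • a)) a 0 := by
    simpa using hasDerivAt_exp_smul_const a (0 : ℝ)
  have hb : HasDerivAt (fun t : ℝ ↦ exp (t • b)) b 0 := by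
    simpa using hasDerivAt_exp_smul_const b (0 : ℝ)
  have hab : HasDerivAt (fun t : ℝ ↦ exp (t • a) * exp (t • b)) (a + b) 0 := by
    simpa using ha.fun_mul hb
  exact tendsto_inv_nat_pow_of_hasDerivAt hab (by simp)

end ProductFormula

section TracePower

open RCLike (re)

variable {n 𝕜 : Type*} [Fintype n] [RCLike 𝕜]

theorem trace_mul_pow_comm [DecidableEq n] {R : Type*} [CommSemiring R] (A B : Matrix n n R)
    (k : ℕ) : ((A * B) ^ k).trace = ((B * A) ^ k).trace := by
  cases k with
  | zero => simp
  | succ k => rw [pow_succ, ← mul_assoc, mul_pow_mul, trace_mul_comm, ← mul_assoc, pow_succ']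

open scoped ComplexOrder in
theorem re_trace_mul_le {m : Type*} [Fintype m] (A : Matrix m n 𝕜) (B : Matrix n m 𝕜) :
    re (A * B).trace ≤ (re (A * Aᴴ).trace + re (Bᴴ * B).trace) / 2 := by
  have h : 0 ≤ re ((A - Bᴴ) * (A - Bᴴ)ᴴ).trace :=
    (RCLike.nonneg_iff.1 (posSemidef_self_mul_conjTranspose (A - Bᴴ)).trace_nonneg).1
  have hconj : re (Bᴴ * Aᴴ).trace = re (A * B).trace := by
    rw [← conjTranspose_mul, trace_conjTranspose, RCLike.star_def, RCLike.conj_re]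
  simp only [conjTranspose_sub, conjTranspose_conjTranspose, Matrix.sub_mul, Matrix.mul_sub,
    trace_sub, map_sub, hconj] at h
  linarith

variable [DecidableEq n]

theorem re_trace_conjTranspose_mul_self_pow_mul_le (Z : Matrix n n 𝕜) (m : ℕ) :
    re ((Zᴴ * Z) ^ m * (Z * Zᴴ) ^ m).trace ≤ re ((Z * Zᴴ) ^ (2 * m)).trace := by
  have h := re_trace_mul_le ((Zᴴ * Z) ^ m) ((Z * Zᴴ) ^ m)
  rw [((isHermitian_conjTranspose_mul_self Z).pow m).eq,
    ((isHermitian_mul_conjTranspose_self Z).pow m).eq, ← pow_add, ← pow_add, ← two_mul,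
    trace_mul_pow_comm Zᴴ Z] at h
  linarith

/- The two halves are proved together because each needs the other: passing from `Z` to `Z ^ 2`
turns the first into the second for the Hermitian matrices `Zᴴ * Z` and `Z * Zᴴ`, and the first
for `Z = A * B` turns the second into itself for `A ^ 2` and `B ^ 2`. -/
theorem re_trace_pow_and_mul_pow_le (k : ℕ) :
    (∀ Z : Matrix n n 𝕜, re (Z ^ (2 * 2 ^ k)).trace ≤ re ((Z * Zᴴ) ^ 2 ^ k).trace) ∧
    ∀ A B : Matrix n n 𝕜, A.IsHermitian → B.IsHermitian →
      re ((A * B) ^ 2 ^ k).trace ≤ re (A ^ 2 ^ k * B ^ 2 ^ k).trace := by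
  induction k with
  | zero =>
    refine ⟨fun Z ↦ ?_, fun A B _ _ ↦ by simp⟩
    have h := re_trace_mul_le Z Z
    rw [trace_mul_comm Zᴴ Z] at h
    simpa [sq] using h
  | succ k ih =>
    obtain ⟨ihZ, ihAB⟩ := ih
    refine ⟨fun Z ↦ ?_, fun A B hA hB ↦ ?_⟩
    · calc re (Z ^ (2 * 2 ^ (k + 1))).trace
          = re ((Z ^ 2) ^ (2 * 2 ^ k)).trace := by rw [← pow_mul, pow_succ']
        _ ≤ re ((Z ^ 2 * (Z ^ 2)ᴴ) ^ 2 ^ k).trace := ihZ _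
        _ = re (((Zᴴ * Z) * (Z * Zᴴ)) ^ 2 ^ k).trace := by
          rw [sq, conjTranspose_mul, mul_assoc, trace_mul_pow_comm Z]
          simp only [mul_assoc]
          rw [← mul_assoc Z Zᴴ, trace_mul_pow_comm, mul_assoc]
        _ ≤ re ((Zᴴ * Z) ^ 2 ^ k * (Z * Zᴴ) ^ 2 ^ k).trace :=
          ihAB _ _ (isHermitian_conjTranspose_mul_self Z) (isHermitian_mul_conjTranspose_self Z)
        _ ≤ re ((Z * Zᴴ) ^ 2 ^ (k + 1)).trace := by
          rw [pow_succ']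
          exact re_trace_conjTranspose_mul_self_pow_mul_le Z _
    · calc re ((A * B) ^ 2 ^ (k + 1)).trace
          = re ((A * B) ^ (2 * 2 ^ k)).trace := by rw [pow_succ']
        _ ≤ re ((A * B * (A * B)ᴴ) ^ 2 ^ k).trace := ihZ _
        _ = re ((A ^ 2 * B ^ 2) ^ 2 ^ k).trace := by
          rw [conjTranspose_mul, hA.eq, hB.eq, mul_assoc, trace_mul_pow_comm A]
          rw [trace_mul_pow_comm (A ^ 2)]
          simp only [sq, mul_assoc]
        _ ≤ re ((A ^ 2) ^ 2 ^ k * (B ^ 2) ^ 2 ^ k).trace := ihAB _ _ (hA.pow 2) (hB.pow 2)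
        _ = _ := by rw [← pow_mul, ← pow_mul, ← pow_succ']

theorem re_trace_mul_pow_two_pow_le {A B : Matrix n n 𝕜} (hA : A.IsHermitian)
    (hB : B.IsHermitian) (k : ℕ) :
    re ((A * B) ^ 2 ^ k).trace ≤ re (A ^ 2 ^ k * B ^ 2 ^ k).trace :=
  (re_trace_pow_and_mul_pow_le k).2 A B hA hB

open scoped Matrix.Norms.Operator in
open NormedSpace Filter Topology in
theorem re_trace_exp_add_le_re_trace_exp_mul_exp {A B : Matrix n n 𝕜} (hA : A.IsHermitian)
    (hB : B.IsHermitian) :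
    re (exp (A + B)).trace ≤ re (exp A * exp B).trace := by
  cases isEmpty_or_nonempty n
  · simp [Matrix.trace]
  have hlim := (tendsto_exp_smul_mul_exp_smul_pow (𝔸 := Matrix n n 𝕜) A B).comp
    (tendsto_pow_atTop_atTop_of_one_lt (one_lt_two (α := ℕ)))
  have hexp (M : Matrix n n 𝕜) (k : ℕ) : exp (((2 ^ k : ℕ) : ℝ)⁻¹ • M) ^ 2 ^ k = exp M := by
    rw [← Matrix.exp_nsmul, ← Nat.cast_smul_eq_nsmul ℝ, smul_inv_smul₀ (by positivity)]
  have hcont : Continuous fun M : Matrix n n 𝕜 ↦ re M.trace := by fun_prop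
  refine le_of_tendsto' ((hcont.tendsto _).comp hlim) fun k ↦ ?_
  have h := re_trace_mul_pow_two_pow_le (hA.smul (.all ((2 ^ k : ℕ) : ℝ)⁻¹)).exp
    (hB.smul (.all ((2 ^ k : ℕ) : ℝ)⁻¹)).exp k
  rwa [hexp, hexp] at h

end TracePower

section MatrixChernoff

open RCLike (re)
open scoped MatrixOrder ComplexOrder

variable {n 𝕜 : Type*} [Fintype n] [RCLike 𝕜]

theorem re_trace_mul_le_of_le {P Q B : Matrix n n 𝕜} (hPQ : P ≤ Q) (hB : 0 ≤ B) :
    re (P * B).trace ≤ re (Q * B).trace := by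
  classical
  obtain ⟨C, rfl⟩ := CStarAlgebra.nonneg_iff_eq_star_mul_self.1 hB
  have h := ((le_iff.1 hPQ).mul_mul_conjTranspose_same C).trace_nonneg
  rw [mul_assoc, trace_mul_comm, mul_assoc, sub_mul, trace_sub] at h
  simpa [star_eq_conjTranspose] using (RCLike.nonneg_iff.1 h).1

variable [DecidableEq n]

theorem re_trace_cfc {A : Matrix n n 𝕜} (hA : A.IsHermitian) (f : ℝ → ℝ) :
    re (cfc f A).trace = ∑ i, f (hA.eigenvalues i) := by
  rw [hA.cfc_eq, IsHermitian.cfc, Unitary.conjStarAlgAut_apply, trace_mul_cycle]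
  simp [trace_diagonal]

theorem cfc_real_exp_eq_exp {A : Matrix n n 𝕜} (hA : A.IsHermitian) :
    cfc Real.exp A = NormedSpace.exp A := by
  let U := Unitary.toUnits hA.eigenvectorUnitary
  let D : Matrix n n 𝕜 := diagonal (RCLike.ofReal ∘ hA.eigenvalues)
  have hexp : NormedSpace.exp D = diagonal (RCLike.ofReal ∘ Real.exp ∘ hA.eigenvalues) := by
    rw [Matrix.exp_diagonal, diagonal_injective.eq_iff]
    ext i
    rw [Pi.coe_exp, Function.comp_apply, Function.comp_apply, Function.comp_apply,
      Real.exp_eq_exp_ℝ]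
    exact (NormedSpace.algebraMap_exp_comm (hA.eigenvalues i)).symm
  have hUD : A = U * D * (U⁻¹ : (Matrix n n 𝕜)ˣ) := by
    conv_lhs => rw [hA.spectral_theorem, Unitary.conjStarAlgAut_apply]
    rfl
  conv_rhs => rw [hUD]
  rw [Matrix.exp_units_conj, hexp, hA.cfc_eq, IsHermitian.cfc, Unitary.conjStarAlgAut_apply]
  rfl

theorem cfc_exp_mul {A : Matrix n n 𝕜} (hA : A.IsHermitian) (c : ℝ) :
    cfc (fun x ↦ Real.exp (c * x)) A = NormedSpace.exp (c • A) := by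
  rw [← cfc_real_exp_eq_exp (hA.smul (.all c)), ← cfc_comp_smul c Real.exp A]
  rfl

theorem exp_smul_nonneg {A : Matrix n n 𝕜} (hA : A.IsHermitian) (c : ℝ) :
    0 ≤ NormedSpace.exp (c • A) := by
  rw [← cfc_exp_mul hA]
  exact cfc_nonneg fun x _ ↦ Real.exp_nonneg _

theorem exp_le_re_trace_exp_smul {A : Matrix n n 𝕜} (hA : A.IsHermitian) {a θ : ℝ} (hθ : 0 ≤ θ)
    (ha : ¬ a • (1 : Matrix n n 𝕜) ≤ A) :
    Real.exp (-θ * a) ≤ re (NormedSpace.exp ((-θ) • A)).trace := by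
  rw [← Algebra.algebraMap_eq_smul_one, algebraMap_le_iff_le_spectrum hA.isSelfAdjoint,
    hA.spectrum_real_eq_range_eigenvalues, Set.forall_mem_range] at ha
  push Not at ha
  obtain ⟨i, hi⟩ := ha
  calc Real.exp (-θ * a) ≤ Real.exp (-θ * hA.eigenvalues i) :=
        Real.exp_le_exp.2 (mul_le_mul_of_nonpos_left hi.le (neg_nonpos.2 hθ))
    _ ≤ ∑ i, Real.exp (-θ * hA.eigenvalues i) :=
        Finset.single_le_sum (f := fun i ↦ Real.exp (-θ * hA.eigenvalues i))
          (fun i _ ↦ Real.exp_nonneg _) (Finset.mem_univ i)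
    _ = re (NormedSpace.exp ((-θ) • A)).trace := by rw [← cfc_exp_mul hA, re_trace_cfc hA]

theorem exp_neg_mul_le_of_mem_Icc {x : ℝ} (hx : x ∈ Set.Icc 0 1) (θ : ℝ) :
    Real.exp (-θ * x) ≤ 1 - (1 - Real.exp (-θ)) * x := by
  have h := convexOn_exp.2 (Set.mem_univ 0) (Set.mem_univ (-θ)) (sub_nonneg.2 hx.2) hx.1
    (sub_add_cancel 1 x)
  simp only [smul_eq_mul, mul_zero, zero_add, Real.exp_zero] at h
  rw [mul_comm x (-θ)] at h
  linarith

theorem exp_neg_smul_le {A : Matrix n n 𝕜} (hA0 : 0 ≤ A) (hA1 : A ≤ 1) (θ : ℝ) :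
    NormedSpace.exp ((-θ) • A) ≤ 1 - (1 - Real.exp (-θ)) • A := by
  have hA : A.IsHermitian := (nonneg_iff_posSemidef.1 hA0).isHermitian
  have hspec : ∀ x ∈ spectrum ℝ A, x ∈ Set.Icc 0 1 := fun x hx ↦
    ⟨spectrum_nonneg_of_nonneg hA0 hx,
      (le_algebraMap_iff_spectrum_le hA.isSelfAdjoint).1 (by simpa using hA1) x hx⟩
  calc NormedSpace.exp ((-θ) • A) = cfc (fun x ↦ Real.exp (-θ * x)) A := (cfc_exp_mul hA _).symm
    _ ≤ cfc (fun x ↦ 1 - (1 - Real.exp (-θ)) * x) A :=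
        cfc_mono fun x hx ↦ exp_neg_mul_le_of_mem_Icc (hspec x hx) θ
    _ = 1 - (1 - Real.exp (-θ)) • A := by
        rw [cfc_sub .., cfc_const_one .., cfc_const_mul_id ..]

section IID

variable {ι : Type*} [Fintype ι]

theorem sum_fin_succ_pi {M : Type*} [AddCommMonoid M] {r : ℕ} (f : (Fin (r + 1) → ι) → M) :
    ∑ j, f j = ∑ j : Fin r → ι, ∑ i, f (Fin.cons i j : Fin (r + 1) → ι) := by
  rw [← (Fin.consEquiv fun _ ↦ ι).sum_comp, Fintype.sum_prod_type, Finset.sum_comm]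
  rfl

theorem sum_mul_re_trace_exp_add_le {p : ι → ℝ} (hp : ∀ i, 0 ≤ p i)
    {Y : ι → Matrix n n 𝕜} (hY : ∀ i, (Y i).IsHermitian) {c : ℝ}
    (hYc : ∑ i, p i • NormedSpace.exp (Y i) ≤ c • 1) {S : Matrix n n 𝕜} (hS : S.IsHermitian) :
    ∑ i, p i * re (NormedSpace.exp (Y i + S)).trace ≤ c * re (NormedSpace.exp S).trace := by
  calc ∑ i, p i * re (NormedSpace.exp (Y i + S)).trace
      ≤ ∑ i, p i * re (NormedSpace.exp (Y i) * NormedSpace.exp S).trace :=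
        Finset.sum_le_sum fun i _ ↦ mul_le_mul_of_nonneg_left
          (re_trace_exp_add_le_re_trace_exp_mul_exp (hY i) hS) (hp i)
    _ = re ((∑ i, p i • NormedSpace.exp (Y i)) * NormedSpace.exp S).trace := by
        simp only [Finset.sum_mul, trace_sum, map_sum, smul_mul_assoc, trace_smul, RCLike.smul_re]
    _ ≤ re ((c • 1 : Matrix n n 𝕜) * NormedSpace.exp S).trace :=
        re_trace_mul_le_of_le hYc (by simpa using exp_smul_nonneg hS 1)
    _ = c * re (NormedSpace.exp S).trace := by rw [smul_one_mul, trace_smul, RCLike.smul_re]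

theorem sum_prod_mul_re_trace_exp_sum_le {p : ι → ℝ} (hp : ∀ i, 0 ≤ p i)
    {Y : ι → Matrix n n 𝕜} (hY : ∀ i, (Y i).IsHermitian) {c : ℝ} (hc : 0 ≤ c)
    (hYc : ∑ i, p i • NormedSpace.exp (Y i) ≤ c • 1) (r : ℕ) :
    ∑ j : Fin r → ι, (∏ t, p (j t)) * re (NormedSpace.exp (∑ t, Y (j t))).trace
      ≤ c ^ r * Fintype.card n := by
  induction r with
  | zero => simp
  | succ r ih =>
    calc ∑ j : Fin (r + 1) → ι, (∏ t, p (j t)) * re (NormedSpace.exp (∑ t, Y (j t))).trace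
        = ∑ j : Fin r → ι, (∏ t, p (j t)) *
            ∑ i, p i * re (NormedSpace.exp (Y i + ∑ t, Y (j t))).trace := by
          simp only [sum_fin_succ_pi, Fin.prod_univ_succ, Fin.sum_univ_succ, Fin.cons_zero,
            Fin.cons_succ, Finset.mul_sum]
          refine Finset.sum_congr rfl fun j _ ↦ Finset.sum_congr rfl fun i _ ↦ by ring
      _ ≤ ∑ j : Fin r → ι, (∏ t, p (j t)) *
            (c * re (NormedSpace.exp (∑ t, Y (j t))).trace) := by
          gcongr with j
          · exact Finset.prod_nonneg fun t _ ↦ hp (j t)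
          · exact sum_mul_re_trace_exp_add_le hp hY hYc
              (isSelfAdjoint_sum _ fun t _ ↦ (hY (j t)).isSelfAdjoint)
      _ = c * ∑ j : Fin r → ι, (∏ t, p (j t)) *
            re (NormedSpace.exp (∑ t, Y (j t))).trace := by
          rw [Finset.mul_sum]
          exact Finset.sum_congr rfl fun j _ ↦ by ring
      _ ≤ c ^ (r + 1) * Fintype.card n := by
          rw [pow_succ', mul_assoc]
          gcongr

/-- The probability of `E` when `r` indices are drawn independently with weights `p`. -/
noncomputable def iidProb (p : ι → ℝ) (r : ℕ) (E : Set (Fin r → ι)) : ℝ :=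
  ∑ j, E.indicator (fun j ↦ ∏ t, p (j t)) j

theorem iidProb_mono {p : ι → ℝ} (hp : ∀ i, 0 ≤ p i) {r : ℕ} {E F : Set (Fin r → ι)}
    (hEF : E ⊆ F) : iidProb p r E ≤ iidProb p r F :=
  Finset.sum_le_sum fun j _ ↦ Set.indicator_le_indicator_of_subset hEF
    (fun j ↦ Finset.prod_nonneg fun t _ ↦ hp (j t)) j

theorem iidProb_add_iidProb_compl {p : ι → ℝ} (hp1 : ∑ i, p i = 1) {r : ℕ}
    (E : Set (Fin r → ι)) : iidProb p r E + iidProb p r Eᶜ = 1 := by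
  simp only [iidProb, ← Finset.sum_add_distrib, Set.indicator_self_add_compl_apply]
  rw [← Fintype.piFinset_univ, ← Finset.prod_univ_sum]
  simp [hp1]

theorem mul_iidProb_le_sum {p : ι → ℝ} (hp : ∀ i, 0 ≤ p i) {r : ℕ} {E : Set (Fin r → ι)}
    {f : (Fin r → ι) → ℝ} (hf : ∀ j, 0 ≤ f j) {a : ℝ} (ha : ∀ j ∈ E, a ≤ f j) :
    a * iidProb p r E ≤ ∑ j, (∏ t, p (j t)) * f j := by
  have hprod (j : Fin r → ι) : 0 ≤ ∏ t, p (j t) := Finset.prod_nonneg fun t _ ↦ hp (j t)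
  rw [iidProb, Finset.mul_sum]
  refine Finset.sum_le_sum fun j _ ↦ ?_
  by_cases hj : j ∈ E
  · rw [Set.indicator_of_mem hj, mul_comm]
    exact mul_le_mul_of_nonneg_left (ha j hj) (hprod j)
  · rw [Set.indicator_of_notMem hj, mul_zero]
    exact mul_nonneg (hprod j) (hf j)

theorem exp_neg_le_one_sub_add_sq_div_two {x : ℝ} (hx : 0 ≤ x) :
    Real.exp (-x) ≤ 1 - x + x ^ 2 / 2 := by
  have hpos : 0 ≤ 1 - x + x ^ 2 / 2 := by nlinarith [sq_nonneg (x - 1)]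
  rw [Real.exp_neg, inv_le_iff_one_le_mul₀ (Real.exp_pos x)]
  calc 1 ≤ (1 - x + x ^ 2 / 2) * (1 + x + x ^ 2 / 2) := by nlinarith [sq_nonneg (x ^ 2)]
    _ ≤ (1 - x + x ^ 2 / 2) * Real.exp x :=
        mul_le_mul_of_nonneg_left (Real.quadratic_le_exp_of_nonneg hx) hpos

theorem sum_smul_exp_neg_smul_le {p : ι → ℝ} (hp : ∀ i, 0 ≤ p i) (hp1 : ∑ i, p i = 1)
    {X : ι → Matrix n n 𝕜} (hX0 : ∀ i, 0 ≤ X i) (hX1 : ∀ i, X i ≤ 1) {μ : ℝ}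
    (hμ : μ • 1 ≤ ∑ i, p i • X i) {θ : ℝ} (hθ : 0 ≤ θ) :
    ∑ i, p i • NormedSpace.exp ((-θ) • X i)
      ≤ Real.exp (-((1 - Real.exp (-θ)) * μ)) • (1 : Matrix n n 𝕜) := by
  set g := 1 - Real.exp (-θ)
  have hg : 0 ≤ g := sub_nonneg.2 (Real.exp_le_one_iff.2 (neg_nonpos.2 hθ))
  calc ∑ i, p i • NormedSpace.exp ((-θ) • X i) ≤ ∑ i, p i • (1 - g • X i) :=
        Finset.sum_le_sum fun i _ ↦
          smul_le_smul_of_nonneg_left (exp_neg_smul_le (hX0 i) (hX1 i) θ) (hp i)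
    _ = 1 - g • ∑ i, p i • X i := by
        simp only [smul_sub, Finset.sum_sub_distrib, ← Finset.sum_smul, hp1, one_smul,
          Finset.smul_sum, smul_comm g]
    _ ≤ 1 - g • μ • 1 := sub_le_sub_left (smul_le_smul_of_nonneg_left hμ hg) 1
    _ = (1 - g * μ) • 1 := by rw [smul_smul, sub_smul, one_smul]
    _ ≤ Real.exp (-(g * μ)) • 1 :=
        smul_le_smul_of_nonneg_right (Real.one_sub_le_exp_neg _) zero_le_one

theorem iidProb_not_smul_one_le_sum_le {p : ι → ℝ} (hp : ∀ i, 0 ≤ p i) (hp1 : ∑ i, p i = 1)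
    {X : ι → Matrix n n 𝕜} (hX0 : ∀ i, 0 ≤ X i) (hX1 : ∀ i, X i ≤ 1) {μ : ℝ} (hμ0 : 0 ≤ μ)
    (hμ : μ • 1 ≤ ∑ i, p i • X i) {δ : ℝ} (hδ : 0 ≤ δ) (r : ℕ) :
    iidProb p r {j | ¬ ((1 - δ) * (r * μ)) • (1 : Matrix n n 𝕜) ≤ ∑ t, X (j t)}
      ≤ Fintype.card n * Real.exp (-(δ ^ 2 * (r * μ) / 2)) := by
  set a := (1 - δ) * (r * μ)
  set g := 1 - Real.exp (-δ)
  have hX (i : ι) : (X i).IsHermitian := (nonneg_iff_posSemidef.1 (hX0 i)).isHermitian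
  have hS (j : Fin r → ι) : (∑ t, X (j t)).IsHermitian :=
    isSelfAdjoint_sum _ fun t _ ↦ (hX (j t)).isSelfAdjoint
  have htrace (j : Fin r → ι) : 0 ≤ re (NormedSpace.exp ((-δ) • ∑ t, X (j t))).trace :=
    (RCLike.nonneg_iff.1
      (nonneg_iff_posSemidef.1 (exp_smul_nonneg (hS j) (-δ))).trace_nonneg).1
  have hmgf := sum_prod_mul_re_trace_exp_sum_le hp (fun i ↦ (hX i).smul (.all (-δ)))
    (Real.exp_nonneg _) (sum_smul_exp_neg_smul_le hp hp1 hX0 hX1 hμ hδ) r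
  simp only [← Finset.smul_sum] at hmgf
  have hmarkov := (mul_iidProb_le_sum hp htrace fun j hj ↦
    exp_le_re_trace_exp_smul (a := a) (hS j) hδ hj).trans hmgf
  have hexp : Real.exp (-(g * μ)) ^ r
      ≤ Real.exp (-δ * a) * Real.exp (-(δ ^ 2 * (r * μ) / 2)) := by
    rw [← Real.exp_nat_mul, ← Real.exp_add, Real.exp_le_exp]
    nlinarith [mul_le_mul_of_nonneg_right (exp_neg_le_one_sub_add_sq_div_two hδ)
      (mul_nonneg r.cast_nonneg hμ0)]
  refine le_of_mul_le_mul_left (hmarkov.trans ?_) (Real.exp_pos (-δ * a))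
  rw [mul_left_comm, mul_comm]
  gcongr

end IID

end MatrixChernoff

section LeverageSampling

open scoped MatrixOrder

/-- The orthogonal projection onto the line spanned by `v`; it is `0` when `v = 0`, because
`0⁻¹ = 0`. -/
noncomputable def lineProj {n : Type*} [Fintype n] (v : n → ℝ) : Matrix n n ℝ :=
  (v ⬝ᵥ v)⁻¹ • vecMulVec v v

section LineProj

variable {n : Type*} [Fintype n] (v : n → ℝ)

theorem dotProduct_smul_lineProj : (v ⬝ᵥ v) • lineProj v = vecMulVec v v := by
  by_cases h : v = 0
  · simp [h]
  · exact smul_inv_smul₀ (dotProduct_self_eq_zero.not.2 h) _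

theorem dotProduct_lineProj_mulVec (x : n → ℝ) :
    x ⬝ᵥ lineProj v *ᵥ x = (v ⬝ᵥ v)⁻¹ * (v ⬝ᵥ x) ^ 2 := by
  rw [lineProj, smul_mulVec, vecMulVec_mulVec, dotProduct_smul, dotProduct_smul, dotProduct_comm x]
  simp [sq]

theorem isStarProjection_lineProj : IsStarProjection (lineProj v) where
  isIdempotentElem := by
    have hW : vecMulVec v v * lineProj v = vecMulVec v v := by
      rw [lineProj, mul_smul_comm, vecMulVec_mul_vecMulVec, vecMulVec_smul, smul_comm]
      exact dotProduct_smul_lineProj v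
    calc lineProj v * lineProj v = (v ⬝ᵥ v)⁻¹ • (vecMulVec v v * lineProj v) := smul_mul_assoc ..
      _ = lineProj v := by rw [hW, lineProj]
  isSelfAdjoint := by
    rw [IsSelfAdjoint, lineProj, star_smul, star_trivial, star_eq_conjTranspose,
      conjTranspose_eq_transpose_of_trivial, transpose_vecMulVec]

end LineProj

theorem sum_vecMulVec_row {m n : Type*} [Fintype m] (V : Matrix m n ℝ) :
    ∑ i, vecMulVec (V i) (V i) = Vᵀ * V := by
  ext a b
  simp [Matrix.sum_apply, vecMulVec_apply, mul_apply]

theorem euclNorm_sq {n : ℕ} (x : Fin n → ℝ) : euclNorm x ^ 2 = x ⬝ᵥ x := by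
  rw [euclNorm, Real.sq_sqrt (Finset.sum_nonneg fun i _ ↦ sq_nonneg _)]
  simp only [dotProduct, sq]

variable {d ρ : ℕ} {V : Matrix (Fin d) (Fin ρ) ℝ}

theorem euclNorm_mulVec_sq_of_transpose_mul_self (hV : Vᵀ * V = 1) (x : Fin ρ → ℝ) :
    euclNorm (V *ᵥ x) ^ 2 = x ⬝ᵥ x := by
  rw [euclNorm_sq, dotProduct_mulVec, vecMul_mulVec, hV, vecMul_one]

theorem lvgProb_eq (V : Matrix (Fin d) (Fin ρ) ℝ) (i : Fin d) : lvgProb V i = V i ⬝ᵥ V i / ρ := by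
  simp only [lvgProb, dotProduct, sq]

theorem lvgProb_nonneg (V : Matrix (Fin d) (Fin ρ) ℝ) (i : Fin d) : 0 ≤ lvgProb V i :=
  div_nonneg (Finset.sum_nonneg fun _ _ ↦ sq_nonneg _) ρ.cast_nonneg

theorem sum_lvgProb_smul_lineProj (V : Matrix (Fin d) (Fin ρ) ℝ) :
    ∑ i, lvgProb V i • lineProj (V i) = (ρ : ℝ)⁻¹ • (Vᵀ * V) := by
  simp only [lvgProb_eq, div_eq_inv_mul, mul_smul, dotProduct_smul_lineProj, ← Finset.smul_sum,
    sum_vecMulVec_row]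

theorem sum_lvgProb (hρ : 0 < ρ) (hV : Vᵀ * V = 1) : ∑ i, lvgProb V i = 1 := by
  have htrace : ∑ i, V i ⬝ᵥ V i = ρ := by
    simpa [trace_sum, trace_vecMulVec, hV] using congrArg trace (sum_vecMulVec_row V)
  simp only [lvgProb_eq, ← Finset.sum_div, htrace]
  exact div_self (Nat.cast_ne_zero.2 hρ.ne')

theorem euclNorm_lvgMatrix_transpose_mulVec_sq (V : Matrix (Fin d) (Fin ρ) ℝ) {r : ℕ}
    (j : Fin r → Fin d) (x : Fin ρ → ℝ) :
    euclNorm ((lvgMatrix V r j)ᵀ *ᵥ (V *ᵥ x)) ^ 2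
      = ρ / r * (x ⬝ᵥ (∑ t, lineProj (V (j t))) *ᵥ x) := by
  have hcoord (t : Fin r) : ((lvgMatrix V r j)ᵀ *ᵥ (V *ᵥ x)) t
      = (V (j t) ⬝ᵥ x) / Real.sqrt (r * lvgProb V (j t)) := by
    simp [lvgMatrix, mulVec, dotProduct, ite_mul, div_eq_inv_mul]
  have hterm (t : Fin r) : (V (j t) ⬝ᵥ x / Real.sqrt (r * lvgProb V (j t))) ^ 2
      = ρ / r * (x ⬝ᵥ lineProj (V (j t)) *ᵥ x) := by
    rw [div_pow, Real.sq_sqrt (mul_nonneg r.cast_nonneg (lvgProb_nonneg V _)), lvgProb_eq,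
      dotProduct_lineProj_mulVec, mul_div_assoc', div_div_eq_mul_div]
    simp only [div_eq_mul_inv, mul_inv]
    ring
  calc euclNorm ((lvgMatrix V r j)ᵀ *ᵥ (V *ᵥ x)) ^ 2
      = ∑ t, ((lvgMatrix V r j)ᵀ *ᵥ (V *ᵥ x)) t ^ 2 := by
        rw [euclNorm_sq]
        simp only [dotProduct, sq]
    _ = ∑ t, ρ / r * (x ⬝ᵥ lineProj (V (j t)) *ᵥ x) := by simp only [hcoord, hterm]
    _ = ρ / r * (x ⬝ᵥ (∑ t, lineProj (V (j t))) *ᵥ x) := by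
        rw [sum_mulVec, dotProduct_sum, Finset.mul_sum]

theorem one_sub_le_iidProb_subspaceEmbedding (hρ : 0 < ρ) (hV : Vᵀ * V = 1) {δ : ℝ} (hδ : 0 ≤ δ)
    {r : ℕ} (hr : 0 < r) :
    1 - ρ * Real.exp (-(δ ^ 2 * (r / ρ) / 2)) ≤ iidProb (lvgProb V) r
      {j | ∀ x : Fin ρ → ℝ, (1 - δ) * euclNorm (V *ᵥ x) ^ 2
        ≤ euclNorm ((lvgMatrix V r j)ᵀ *ᵥ (V *ᵥ x)) ^ 2} := by
  set E := {j : Fin r → Fin d |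
    ((1 - δ) * (r * (ρ : ℝ)⁻¹)) • (1 : Matrix (Fin ρ) (Fin ρ) ℝ) ≤ ∑ t, lineProj (V (j t))}
  have hchernoff := iidProb_not_smul_one_le_sum_le (lvgProb_nonneg V) (sum_lvgProb hρ hV)
    (fun i ↦ (isStarProjection_lineProj (V i)).nonneg)
    (fun i ↦ (isStarProjection_lineProj (V i)).le_one)
    (inv_nonneg.2 ρ.cast_nonneg) (by rw [sum_lvgProb_smul_lineProj, hV]) hδ r
  have hE : 1 - ρ * Real.exp (-(δ ^ 2 * (r / ρ) / 2)) ≤ iidProb (lvgProb V) r E := by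
    rw [Fintype.card_fin] at hchernoff
    rw [← iidProb_add_iidProb_compl (sum_lvgProb hρ hV) E, div_eq_mul_inv (r : ℝ)]
    exact sub_le_iff_le_add.2 (add_le_add_right hchernoff _)
  refine hE.trans (iidProb_mono (lvgProb_nonneg V) fun j hj x ↦ ?_)
  have hquad := (le_iff.1 hj).dotProduct_mulVec_nonneg x
  rw [star_trivial, sub_mulVec, dotProduct_sub, smul_mulVec, one_mulVec, dotProduct_smul,
    smul_eq_mul, sub_nonneg] at hquad
  rw [euclNorm_mulVec_sq_of_transpose_mul_self hV, euclNorm_lvgMatrix_transpose_mulVec_sq]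
  calc (1 - δ) * (x ⬝ᵥ x) = ρ / r * ((1 - δ) * (r * (ρ : ℝ)⁻¹) * (x ⬝ᵥ x)) := by
        field_simp
    _ ≤ ρ / r * (x ⬝ᵥ (∑ t, lineProj (V (j t))) *ᵥ x) := by gcongr

end LeverageSampling

section MarginPreservation

theorem one_sub_two_mul_mul_sq_le_of_svmDualObj_le {p d r : ℕ} {X : Matrix (Fin p) (Fin d) ℝ}
    {R : Matrix (Fin d) (Fin r) ℝ} {y αs αt : Fin p → ℝ} {δ : ℝ} (hδ : δ ∈ Set.Icc 0 1)
    (hobj : svmDualObj X y αt ≤ svmDualObj X y αs)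
    (hαs : ∑ i, αs i = euclNorm (Xᵀ *ᵥ (diagonal y *ᵥ αs)) ^ 2)
    (hαt : ∑ i, αt i = euclNorm (Rᵀ *ᵥ (Xᵀ *ᵥ (diagonal y *ᵥ αt))) ^ 2)
    (hR : (1 - δ) * euclNorm (Xᵀ *ᵥ (diagonal y *ᵥ αt)) ^ 2
      ≤ euclNorm (Rᵀ *ᵥ (Xᵀ *ᵥ (diagonal y *ᵥ αt))) ^ 2) :
    (1 - 2 * δ) * euclNorm (Rᵀ *ᵥ (Xᵀ *ᵥ (diagonal y *ᵥ αt))) ^ 2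
      ≤ euclNorm (Xᵀ *ᵥ (diagonal y *ᵥ αs)) ^ 2 := by
  rw [svmDualObj, svmDualObj, hαs, hαt] at hobj
  have hA := sq_nonneg (euclNorm (Xᵀ *ᵥ (diagonal y *ᵥ αs)))
  nlinarith [mul_le_mul_of_nonneg_left hobj (sub_nonneg.2 hδ.2), mul_nonneg hδ.1 hA]

theorem pos_of_mul_log_le {ρ ε r : ℝ} (hρ : 1 ≤ ρ) (hε : ε ∈ Set.Ioo 0 1)
    (hr : 16 * (ρ / ε ^ 2) * Real.log (10 * ρ / ε ^ 2) ≤ r) : 0 < r := by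
  have hε2 : 0 < ε ^ 2 := pow_pos hε.1 2
  have hlog : 0 < Real.log (10 * ρ / ε ^ 2) := by
    refine Real.log_pos ((one_lt_div hε2).2 ?_)
    linarith [pow_le_one₀ (n := 2) hε.1.le hε.2.le]
  exact lt_of_lt_of_le (by positivity) hr

theorem mul_exp_neg_le_of_mul_log_le {ρ ε r : ℝ} (hρ : 1 ≤ ρ) (hε : ε ∈ Set.Ioo 0 1)
    (hr : 16 * (ρ / ε ^ 2) * Real.log (10 * ρ / ε ^ 2) ≤ r) :
    ρ * Real.exp (-((ε / 2) ^ 2 * (r / ρ) / 2)) ≤ 1 / 100 := by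
  have hρ0 : 0 < ρ := one_pos.trans_le hρ
  have hε2 : 0 < ε ^ 2 := pow_pos hε.1 2
  have hlog : Real.log (10 * ρ) ≤ Real.log (10 * ρ / ε ^ 2) :=
    Real.log_le_log (mul_pos (by norm_num) hρ0)
      (le_div_self (by linarith) hε2 (pow_le_one₀ hε.1.le hε.2.le))
  -- The factor `16` leaves a multiple `2` of the logarithm: one copy absorbs the prefactor `ρ`.
  have hcancel (l : ℝ) : (ε / 2) ^ 2 * (16 * (ρ / ε ^ 2) * l / ρ) / 2 = 2 * l := by
    field_simp [hε.1.ne']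
    ring
  have hexponent : Real.log (10 * ρ) + Real.log (10 * ρ) ≤ (ε / 2) ^ 2 * (r / ρ) / 2 := by
    calc Real.log (10 * ρ) + Real.log (10 * ρ)
        ≤ (ε / 2) ^ 2 * (16 * (ρ / ε ^ 2) * Real.log (10 * ρ / ε ^ 2) / ρ) / 2 := by
          rw [hcancel]
          linarith
      _ ≤ (ε / 2) ^ 2 * (r / ρ) / 2 := by gcongr
  calc ρ * Real.exp (-((ε / 2) ^ 2 * (r / ρ) / 2))
      ≤ ρ * Real.exp (-(Real.log (10 * ρ) + Real.log (10 * ρ))) := by gcongr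
    _ = 1 / (100 * ρ) := by
        rw [Real.exp_neg, Real.exp_add, Real.exp_log (by positivity)]
        field_simp
        norm_num
    _ ≤ 1 / 100 := by gcongr; linarith

theorem svm_margin_preservation_leverage_scores_general {p d ρ : ℕ} (hρ : 0 < ρ) {ε : ℝ}
    (hε : ε ∈ Set.Ioo (0 : ℝ) 1) (B : Matrix (Fin p) (Fin ρ) ℝ) {V : Matrix (Fin d) (Fin ρ) ℝ}
    (hV : Vᵀ * V = 1) (y : Fin p → ℝ) {r : ℕ}
    (hr : 16 * ((ρ : ℝ) / ε ^ 2) * Real.log (10 * (ρ : ℝ) / ε ^ 2) ≤ r) :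
    0.99 ≤ iidProb (lvgProb V) r
      {j | ∀ αs αt : Fin p → ℝ, svmDualObj (B * Vᵀ) y αt ≤ svmDualObj (B * Vᵀ) y αs →
        ∑ i, αs i = euclNorm ((B * Vᵀ)ᵀ *ᵥ (diagonal y *ᵥ αs)) ^ 2 →
        ∑ i, αt i
          = euclNorm ((lvgMatrix V r j)ᵀ *ᵥ ((B * Vᵀ)ᵀ *ᵥ (diagonal y *ᵥ αt))) ^ 2 →
        (1 - ε) * euclNorm ((lvgMatrix V r j)ᵀ *ᵥ ((B * Vᵀ)ᵀ *ᵥ (diagonal y *ᵥ αt))) ^ 2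
          ≤ euclNorm ((B * Vᵀ)ᵀ *ᵥ (diagonal y *ᵥ αs)) ^ 2} := by
  have hδ : ε / 2 ∈ Set.Icc (0 : ℝ) 1 := ⟨by linarith [hε.1], by linarith [hε.2]⟩
  have hρ1 : (1 : ℝ) ≤ ρ := Nat.one_le_cast.2 hρ
  have hembed := one_sub_le_iidProb_subspaceEmbedding hρ hV hδ.1
    (Nat.cast_pos.1 (pos_of_mul_log_le hρ1 hε hr))
  have hfail := mul_exp_neg_le_of_mul_log_le hρ1 hε hr
  refine le_trans (by linarith) (hembed.trans ?_)
  refine iidProb_mono (lvgProb_nonneg V) fun j hj αs αt hobj hαs hαt ↦ ?_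
  have hXV (α : Fin p → ℝ) : (B * Vᵀ)ᵀ *ᵥ (diagonal y *ᵥ α) = V *ᵥ (Bᵀ *ᵥ (diagonal y *ᵥ α)) := by
    rw [transpose_mul, transpose_transpose, ← mulVec_mulVec]
  have h := one_sub_two_mul_mul_sq_le_of_svmDualObj_le hδ hobj hαs hαt (hXV αt ▸ hj _)
  rwa [mul_div_cancel₀ _ two_ne_zero] at h

end MarginPreservation

/-- **Theorem 2 (margin preservation by leverage-score feature selection).**
There is an absolute constant `c > 0` such that, in the SVM dual setup with
`r ≥ c·(ρ/ε²)·log(10ρ/ε²)` indices drawn i.i.d. from the leverage-score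
distribution of `V`, with probability at least `0.99` the following holds: for
every maximizer `α*` of `f` over `K` and every maximizer `α̃*` of `f̃` over `K`
satisfying the dual optimality identities,
`(1 − ε)·‖RᵀXᵀYα̃*‖₂² ≤ ‖XᵀYα*‖₂²`.  (The probability of the event is the sum,
over index tuples `j` in the event, of `∏ t, p_{j_t}`.) -/
theorem svm_margin_preservation_leverage_scores :
    ∃ c : ℝ, 0 < c ∧
      ∀ (p d ρ : ℕ), 0 < ρ →
      ∀ ε : ℝ, ε ∈ Set.Ioo (0 : ℝ) 1 →
      ∀ X : Matrix (Fin p) (Fin d) ℝ, X.rank = ρ →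
      ∀ (U : Matrix (Fin p) (Fin ρ) ℝ) (S : Matrix (Fin ρ) (Fin ρ) ℝ)
        (V : Matrix (Fin d) (Fin ρ) ℝ),
        Uᵀ * U = 1 → Vᵀ * V = 1 →
        (∃ σ : Fin ρ → ℝ, (∀ i, 0 < σ i) ∧ S = Matrix.diagonal σ) →
        X = U * S * Vᵀ →
      ∀ y : Fin p → ℝ, (∀ i, y i = 1 ∨ y i = -1) →
      ∀ C : ℝ, 0 < C →
      ∀ r : ℕ, c * ((ρ : ℝ) / ε ^ 2) * Real.log (10 * (ρ : ℝ) / ε ^ 2) ≤ (r : ℝ) →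
        0.99 ≤ ∑ j : Fin r → Fin d,
          Set.indicator
            {j : Fin r → Fin d |
              ∀ αs : Fin p → ℝ,
                svmFeasible y C αs →
                (∀ β, svmFeasible y C β → svmDualObj X y β ≤ svmDualObj X y αs) →
                ∑ i, αs i = euclNorm (Xᵀ.mulVec ((Matrix.diagonal y).mulVec αs)) ^ 2 →
              ∀ αt : Fin p → ℝ,
                svmFeasible y C αt →
                (∀ β, svmFeasible y C β →
                  svmDualObjRed X (lvgMatrix V r j) y β
                    ≤ svmDualObjRed X (lvgMatrix V r j) y αt) →
                ∑ i, αt i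
                  = euclNorm ((lvgMatrix V r j)ᵀ.mulVec
                      (Xᵀ.mulVec ((Matrix.diagonal y).mulVec αt))) ^ 2 →
                (1 - ε) * euclNorm ((lvgMatrix V r j)ᵀ.mulVec
                      (Xᵀ.mulVec ((Matrix.diagonal y).mulVec αt))) ^ 2
                  ≤ euclNorm (Xᵀ.mulVec ((Matrix.diagonal y).mulVec αs)) ^ 2}
            (fun j => ∏ t, lvgProb V (j t)) j :=
  ⟨16, by norm_num, fun _ _ _ hρ _ hε _ _ U S _ _ hV _ hX y _ _ _ _ hr ↦ hX ▸
    (svm_margin_preservation_leverage_scores_general hρ hε (U * S) hV y hr).trans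
      (iidProb_mono (lvgProb_nonneg _) fun _ hj αs _ hmax hαs αt hαt _ ↦
        hj αs αt (hmax αt hαt) hαs)⟩
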